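/- Let A be a real symmetric n×n matrix and let p̃₁,…,p̃ₛ ∈ ℝⁿ satisfy the A-normalization p̃_jᵀ·A·p̃_j = 1 for every j. Given r ∈ ℝⁿ, define the Modified Gram–Schmidt (MGS) quantities in the A-inner product by w₀ = r and, for j = 1,…,s, γ_j = w_{j−1}ᵀ·A·p̃_j and w_j = w_{j−1} − γ_j·p̃_j. Define the Forward Gauss–Seidel (FGS) coefficients recursively by α_j = p̃_jᵀ·A·r − Σ_{i<j} (p̃_jᵀ·A·p̃_i)·α_i for j = 1,…,s. Then α_j = γ_j for every j = 1,…,s, and moreover w_j = r − Σ_{i≤j} α_i·p̃_i for every j = 0,…,s. -/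

import Mathlib

open Matrix Finset

/-!
Unrolling the Gram–Schmidt recursion gives `w j = r - ∑_{i<j} γ i • p i`. Taking the inner
product of this identity with `p j` shows that `γ` satisfies the forward substitution recursion of
the Gauss–Seidel sweep, and that recursion determines its solution.
-/

section ForwardSubstitution

variable {ι R : Type*} [Preorder ι] [Fintype ι] [DecidableLT ι] [NonUnitalNonAssocRing R]

/-- `x` is the first forward Gauss–Seidel sweep, started from zero, for a system `G x = b` whose
matrix has unit diagonal, so that no division by `G j j` occurs. The unknowns multiply from the
left: over a noncommutative ring, the entries of `G` can then be values of left-linear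
functionals. -/
def IsForwardGaussSeidel (G : Matrix ι ι R) (b x : ι → R) : Prop :=
  ∀ j, x j = b j - ∑ i with i < j, x i * G j i

theorem IsForwardGaussSeidel.unique {G : Matrix ι ι R} {b x y : ι → R}
    (hx : IsForwardGaussSeidel G b x) (hy : IsForwardGaussSeidel G b y) : x = y := by
  funext j
  induction j using WellFoundedLT.induction with
  | ind j ih =>
    have sum_eq : ∑ i with i < j, x i * G j i = ∑ i with i < j, y i * G j i :=
      sum_congr rfl fun i hi => by rw [ih i ((mem_filter_univ i).mp hi)]
    rw [hx j, hy j, sum_eq]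

end ForwardSubstitution

theorem eq_sub_sum_of_succ_eq_sub {M : Type*} [AddCommGroup M] {s : ℕ} {w : ℕ → M} {v : Fin s → M}
    (hw : ∀ j : Fin s, w (j + 1) = w j - v j) {j : ℕ} (hj : j ≤ s) :
    w j = w 0 - ∑ i : Fin s with i.val < j, v i := by
  have telescope : ∑ i : Fin s with i.val < j, v i = w 0 - w j := calc
    ∑ i : Fin s with i.val < j, v i
      = ∑ i : Fin s, if i.val < j then w i - w (i + 1) else 0 := by
        simp only [hw, sub_sub_cancel, sum_filter]
    _ = ∑ i ∈ range s with i < j, (w i - w (i + 1)) := by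
        rw [Fin.sum_univ_eq_sum_range fun i => if i < j then w i - w (i + 1) else 0, sum_filter]
    _ = ∑ i ∈ range j, (w i - w (i + 1)) := sum_congr (by grind) fun _ _ => rfl
    _ = w 0 - w j := sum_range_sub' w j
  rw [telescope, sub_sub_cancel]

section ModifiedGramSchmidt

variable {R M : Type*} [Ring R] [AddCommGroup M] [Module R M] {s : ℕ}
  {φ : Fin s → M →ₗ[R] R} {p : Fin s → M} {r : M} {w : ℕ → M} {γ α : Fin s → R}

/-- The residuals `w` and coefficients `γ` of the modified Gram–Schmidt process started at `r`,
which removes the directions `p j` one after the other. The functional `φ j` takes the place of the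
inner product with `p j`. Only `w 0, …, w s` are constrained. -/
structure IsModifiedGramSchmidt (φ : Fin s → M →ₗ[R] R) (p : Fin s → M) (r : M)
    (w : ℕ → M) (γ : Fin s → R) : Prop where
  zero : w 0 = r
  coeff (j : Fin s) : γ j = φ j (w j)
  succ (j : Fin s) : w (j + 1) = w j - γ j • p j

namespace IsModifiedGramSchmidt

theorem residual_eq (h : IsModifiedGramSchmidt φ p r w γ) {j : ℕ} (hj : j ≤ s) :
    w j = r - ∑ i : Fin s with i.val < j, γ i • p i := by
  rw [eq_sub_sum_of_succ_eq_sub h.succ hj, h.zero]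

theorem isForwardGaussSeidel (h : IsModifiedGramSchmidt φ p r w γ) :
    IsForwardGaussSeidel (.of fun j i => φ j (p i)) (fun j => φ j r) γ := fun j => calc
  γ j = φ j (r - ∑ i with i < j, γ i • p i) := by
    rw [h.coeff, h.residual_eq j.is_le']
    simp only [Fin.val_fin_lt]
  _ = φ j r - ∑ i with i < j, γ i * φ j (p i) := by
    simp only [map_sub, map_sum, map_smul, smul_eq_mul]

end IsModifiedGramSchmidt

theorem mgs_fgs_equivalence_general (hγ : IsModifiedGramSchmidt φ p r w γ)
    (hα : IsForwardGaussSeidel (.of fun j i => φ j (p i)) (fun j => φ j r) α) :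
    (∀ j, α j = γ j) ∧
      ∀ j : ℕ, j ≤ s → w j = r - ∑ i : Fin s with i.val < j, α i • p i := by
  obtain rfl : α = γ := hα.unique hγ.isForwardGaussSeidel
  exact ⟨fun _ => rfl, fun _ => hγ.residual_eq⟩

end ModifiedGramSchmidt

/-- **Algebraic equivalence of MGS (in the A-norm) and one FGS sweep.**
Let `A = Aᵀ` and let `p 1, …, p s` be A-normalized (`p j ⬝ᵥ A *ᵥ p j = 1`).
Define the MGS quantities `w 0 = r`, `γ j = w j ⬝ᵥ A *ᵥ p j`,
`w (j+1) = w j - γ j • p j` (0-based indexing), and the FGS coefficients by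
forward substitution `α j = p j ⬝ᵥ A *ᵥ r - ∑_{i<j} (p j ⬝ᵥ A *ᵥ p i) * α i`.
Then `α j = γ j` for all `j`, and `w j = r - ∑_{i<j} α i • p i` for all
`j = 0, …, s`. -/
theorem mgs_fgs_equivalence {n s : ℕ}
    (A : Matrix (Fin n) (Fin n) ℝ) (hA : Aᵀ = A)
    (p : Fin s → (Fin n → ℝ))
    (hnorm : ∀ j : Fin s, p j ⬝ᵥ (A *ᵥ p j) = 1)
    (r : Fin n → ℝ)
    (w : ℕ → (Fin n → ℝ)) (γ : Fin s → ℝ) (α : Fin s → ℝ)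
    (hw0 : w 0 = r)
    (hγ : ∀ j : Fin s, γ j = w j ⬝ᵥ (A *ᵥ p j))
    (hwsucc : ∀ j : Fin s, w ((j : ℕ) + 1) = w j - γ j • p j)
    (hα : ∀ j : Fin s, α j = p j ⬝ᵥ (A *ᵥ r) -
        ∑ i ∈ Finset.univ.filter (fun i : Fin s => i < j), (p j ⬝ᵥ (A *ᵥ p i)) * α i) :
    (∀ j : Fin s, α j = γ j) ∧
      ∀ j : ℕ, j ≤ s →
        w j = r - ∑ i ∈ Finset.univ.filter (fun i : Fin s => (i : ℕ) < j), α i • p i :=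
  mgs_fgs_equivalence_general (φ := fun j => A.toBilin' (p j))
    ⟨hw0, fun j => by rw [hγ, ← dotProduct_transpose_mulVec, hA, toBilin'_apply'], hwsucc⟩
    fun j => by simpa only [toBilin'_apply', of_apply, mul_comm] using hα j
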